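/- arXiv:1410.5767 — 2 statements merged into one kernel-verified Lean document; each statement's English description precedes it below -/
import Mathlib

section
/- Interior tangency principle for constant-mean-curvature graphs: Let Ω ⊆ ℝ² be an open connected set, p₀ ∈ Ω, and let u, v : Ω → ℝ be C² functions such that u ≥ v on Ω and u(p₀) = v(p₀). Suppose there are real constants H₁ and H₂ with H₁ ≤ H₂ such that div(∇u/√(1+|∇u|²)) = 2H₁ on Ω and div(∇v/√(1+|∇v|²)) = 2H₂ on Ω. Then u and v coincide on some open neighborhood of p₀ (and in particular H₁ = H₂). -/
open Real

/-- The divergence of a vector field on the Euclidean plane. -/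
noncomputable def vecDiv (F : EuclideanSpace ℝ (Fin 2) → EuclideanSpace ℝ (Fin 2))
    (x : EuclideanSpace ℝ (Fin 2)) : ℝ :=
  ∑ i, fderiv ℝ F x (EuclideanSpace.single i 1) i

/-- The mean curvature operator `div (∇u / √(1 + |∇u|²))` for a graph. -/
noncomputable def cmcOp (u : EuclideanSpace ℝ (Fin 2) → ℝ)
    (x : EuclideanSpace ℝ (Fin 2)) : ℝ :=
  vecDiv (fun y => (Real.sqrt (1 + ‖gradient u y‖ ^ 2))⁻¹ • gradient u y) x

abbrev E2 := EuclideanSpace ℝ (Fin 2)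
noncomputable def ee (i : Fin 2) : E2 := EuclideanSpace.single i 1

theorem grad_coord (u : E2 → ℝ) (x : E2) (i : Fin 2) : gradient u x i = fderiv ℝ u x (ee i) := by
  have : inner ℝ (gradient u x) (ee i) = fderiv ℝ u x (ee i) := by
    simp [gradient]
  rw [← this, ee, EuclideanSpace.inner_single_right]; simp

theorem grad_sq (u : E2 → ℝ) (x : E2) :
    ‖gradient u x‖^2 = (fderiv ℝ u x (ee 0))^2 + (fderiv ℝ u x (ee 1))^2 := by
  rw [EuclideanSpace.norm_sq_eq]
  simp [grad_coord]

noncomputable def jj (u : E2 → ℝ) (x : E2) : E2 :=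
  fderiv ℝ u x (ee 1) • ee 0 - fderiv ℝ u x (ee 0) • ee 1

theorem cmc_eq (u : E2 → ℝ) (x : E2) (hu : ContDiffAt ℝ 2 u x) :
    cmcOp u x * (Real.sqrt (1 + ‖gradient u x‖^2))^3 =
      fderiv ℝ (fderiv ℝ u) x (ee 0) (ee 0) + fderiv ℝ (fderiv ℝ u) x (ee 1) (ee 1) +
      fderiv ℝ (fderiv ℝ u) x (jj u x) (jj u x) := by
  have h2 : DifferentiableAt ℝ (fderiv ℝ u) x :=
    (hu.fderiv_right (m := 1) (by norm_num)).differentiableAt (by simp)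
  have hi : ∀ i, HasFDerivAt (fun y => fderiv ℝ u y (ee i))
      ((fderiv ℝ (fderiv ℝ u) x).flip (ee i)) x := fun i => by
    have := h2.hasFDerivAt.clm_apply (hasFDerivAt_const (ee i) x)
    simpa using this
  set W : E2 → ℝ := fun y => Real.sqrt (1 + ‖gradient u y‖^2) with hW
  have hWpos : 0 < W x := by simp only [hW]; positivity
  have hWsq : W x ^ 2 = 1 + ((fderiv ℝ u x (ee 0))^2 + (fderiv ℝ u x (ee 1))^2) := by
    simp only [hW]; rw [Real.sq_sqrt (by positivity), grad_sq]
  have hWx : W x = Real.sqrt (1 + ((fderiv ℝ u x (ee 0))^2 + (fderiv ℝ u x (ee 1))^2)) := by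
    simp only [hW, grad_sq]
  have hR : HasDerivAt (fun t : ℝ => (Real.sqrt t)⁻¹) (-((W x)⁻¹^3) / 2)
      (1 + ((fderiv ℝ u x (ee 0))^2 + (fderiv ℝ u x (ee 1))^2)) := by
    have := (Real.hasDerivAt_sqrt (x := 1 + ((fderiv ℝ u x (ee 0))^2 + (fderiv ℝ u x (ee 1))^2))
      (by positivity)).inv (by positivity)
    rw [← hWx] at this
    have e : -((W x)⁻¹^3) / 2 = -(1 / (2 * W x)) / W x ^ 2 := by field_simp
    rw [e]
    exact this
  have hWd : HasFDerivAt (fun y => (Real.sqrt (1 + ((fderiv ℝ u y (ee 0))^2 +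
      (fderiv ℝ u y (ee 1))^2)))⁻¹) ((-((W x)⁻¹^3)) • ((fderiv ℝ u x (ee 0)) •
      (fderiv ℝ (fderiv ℝ u) x).flip (ee 0) + (fderiv ℝ u x (ee 1)) •
      (fderiv ℝ (fderiv ℝ u) x).flip (ee 1))) x := by
    have := hR.comp_hasFDerivAt x ((((hi 0).pow 2).add ((hi 1).pow 2)).const_add 1)
    refine this.congr_fderiv ?_
    ext ξ
    simp
    ring
  have hF : ∀ i, HasFDerivAt (fun y => ((W y)⁻¹ • gradient u y) i) _ x := fun i => by
    have e : (fun y => ((W y)⁻¹ • gradient u y) i) = fun y => (Real.sqrt (1 + ((fderiv ℝ u y (ee 0))^2 + (fderiv ℝ u y (ee 1))^2)))⁻¹ * fderiv ℝ u y (ee i) := by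
      ext y
      simp [hW, grad_sq, grad_coord]
    rw [e]
    exact hWd.mul (hi i)
  have hFd : DifferentiableAt ℝ (fun y => (W y)⁻¹ • gradient u y) x := by
    rw [differentiableAt_euclidean]
    exact fun i => (hF i).differentiableAt
  have hcoord : ∀ i, fderiv ℝ (fun y => (W y)⁻¹ • gradient u y) x (ee i) i =
      fderiv ℝ (fun y => ((W y)⁻¹ • gradient u y) i) x (ee i) := fun i => by
    have := ((EuclideanSpace.proj i : E2 →L[ℝ] ℝ).hasFDerivAt.comp x hFd.hasFDerivAt)
    have h3 := this.fderiv
    have h4 := congrArg (fun L => L (ee i)) h3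
    exact h4.symm
  have : cmcOp u x = ∑ i, fderiv ℝ (fun y => (W y)⁻¹ • gradient u y) x (ee i) i := rfl
  change cmcOp u x * W x ^ 3 = _
  rw [this, Fin.sum_univ_two, hcoord, hcoord, (hF 0).fderiv, (hF 1).fderiv]
  simp only [Fin.isValue, add_apply, smul_apply, ContinuousLinearMap.flip_apply, smul_eq_mul, jj, map_sub, map_smul, sub_apply, ← hWx]
  clear_value W
  generalize fderiv ℝ u x (ee 0) = a at *
  generalize fderiv ℝ u x (ee 1) = b at *
  generalize fderiv ℝ (fderiv ℝ u) x (ee 0) (ee 0) = p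
  generalize fderiv ℝ (fderiv ℝ u) x (ee 0) (ee 1) = q
  generalize fderiv ℝ (fderiv ℝ u) x (ee 1) (ee 0) = r
  generalize fderiv ℝ (fderiv ℝ u) x (ee 1) (ee 1) = s
  generalize W x = w at *
  field_simp
  linear_combination (p+s) * hWsq

theorem sec_min {E : Type*} [NormedAddCommGroup E] [NormedSpace ℝ E] {f : E → ℝ} {x : E}
    (hf : ContDiffAt ℝ 2 f x) (hm : IsLocalMin f x) (ξ : E) :
    0 ≤ fderiv ℝ (fderiv ℝ f) x ξ ξ := by
  by_contra! hneg
  have hline : ∀ t : ℝ, HasDerivAt (fun t : ℝ => x + t • ξ) ξ t := fun t => by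
    simpa using ((hasDerivAt_id t).smul_const ξ).const_add x
  have hc : Filter.Tendsto (fun t : ℝ => x + t • ξ) (nhds 0) (nhds x) := by
    have := (hline 0).continuousAt.tendsto
    simpa using this
  have hd : ∀ᶠ y in nhds x, DifferentiableAt ℝ f y := by
    filter_upwards [hf.eventually (by simp)] with y hy
    exact hy.differentiableAt (by simp)
  have hg : ∀ᶠ t in nhds (0:ℝ), HasDerivAt (fun t : ℝ => f (x + t • ξ))
      (fderiv ℝ f (x + t • ξ) ξ) t := by
    filter_upwards [hc.eventually hd] with t ht
    exact ht.hasFDerivAt.comp_hasDerivAt t (hline t)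
  have hdg : deriv (fun t : ℝ => f (x + t • ξ)) =ᶠ[nhds 0] fun t => fderiv ℝ f (x + t • ξ) ξ := by
    filter_upwards [hg] with t ht using ht.deriv
  have h2 : DifferentiableAt ℝ (fderiv ℝ f) x :=
    (hf.fderiv_right (m := 1) (by norm_num)).differentiableAt (by simp)
  have h2' : HasDerivAt (fun t : ℝ => fderiv ℝ f (x + t • ξ) ξ) (fderiv ℝ (fderiv ℝ f) x ξ ξ) 0 := by
    have h3 : HasFDerivAt (fderiv ℝ f) (fderiv ℝ (fderiv ℝ f) x) (x + (0:ℝ) • ξ) := by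
      simpa using h2.hasFDerivAt
    have := h3.comp_hasDerivAt (0:ℝ) (hline 0)
    simpa using this.clm_apply (hasDerivAt_const (0:ℝ) ξ)
  have hdd : deriv (deriv (fun t : ℝ => f (x + t • ξ))) 0 = fderiv ℝ (fderiv ℝ f) x ξ ξ := by
    rw [hdg.deriv_eq, h2'.deriv]
  have hmin : IsLocalMin (fun t : ℝ => f (x + t • ξ)) 0 := by
    have := hc.eventually hm
    filter_upwards [this] with t ht
    simpa using ht
  have hmax := isLocalMax_of_deriv_deriv_neg (by rw [hdd]; exact hneg) hmin.deriv_eq_zero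
    hg.self_of_nhds.continuousAt
  have hconst : (fun t : ℝ => f (x + t • ξ)) =ᶠ[nhds 0] fun _ => f x := by
    filter_upwards [hmin, hmax] with t h1 h2
    simp at h1 h2 ⊢
    linarith
  have : deriv (deriv (fun t : ℝ => f (x + t • ξ))) 0 = 0 := by
    rw [hconst.deriv.deriv_eq]; simp
  linarith

section
variable {E : Type*} [NormedAddCommGroup E] [InnerProductSpace ℝ E]

theorem bar_d (α k : ℝ) (c x : E) :
    HasFDerivAt (fun x => Real.exp (-α * ‖x - c‖^2) - k)
      ((-2 * α * Real.exp (-α * ‖x - c‖^2)) • innerSL ℝ (x - c)) x := by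
  have h1 : HasFDerivAt (fun x => x - c) (ContinuousLinearMap.id ℝ E) x :=
    (hasFDerivAt_id x).sub_const c
  have := ((h1.norm_sq.const_mul (-α)).exp).sub_const k
  refine this.congr_fderiv ?_
  ext ξ
  simp
  ring

theorem bar_dd (α k : ℝ) (c x ξ η : E) :
    fderiv ℝ (fderiv ℝ (fun x => Real.exp (-α * ‖x - c‖^2) - k)) x ξ η =
      Real.exp (-α * ‖x - c‖^2) * (4 * α^2 * inner ℝ (x - c) ξ * inner ℝ (x - c) η
        - 2 * α * inner ℝ ξ η) := by
  have e : fderiv ℝ (fun x => Real.exp (-α * ‖x - c‖^2) - k) =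
    fun x => (-2 * α * Real.exp (-α * ‖x - c‖^2)) • innerSL ℝ (x - c) := by
    ext1 x; exact (bar_d α k c x).fderiv
  rw [e]
  have h1 : HasFDerivAt (fun x => x - c) (ContinuousLinearMap.id ℝ E) x :=
    (hasFDerivAt_id x).sub_const c
  have h2 := ((h1.norm_sq.const_mul (-α)).exp).const_mul (-2*α)
  have h3 : HasFDerivAt (fun x => innerSL ℝ (x - c)) (innerSL ℝ : E →L[ℝ] E →L[ℝ] ℝ) x := by
    exact (innerSL ℝ : E →L[ℝ] E →L[ℝ] ℝ).hasFDerivAt.comp x h1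
  have h4 := (h2.smul h3).fderiv
  erw [h4]
  simp only [ContinuousLinearMap.add_apply, ContinuousLinearMap.smul_apply, ContinuousLinearMap.smulRight_apply, ContinuousLinearMap.comp_apply, ContinuousLinearMap.id_apply, innerSL_apply_apply, smul_eq_mul, nsmul_eq_mul]
  have h5 : (innerSL ℝ ξ) η = inner ℝ ξ η := innerSL_apply_apply ℝ ξ η
  erw [h5]
  push_cast
  ring
end

theorem ee_norm (i : Fin 2) : ‖ee i‖ = 1 := by simp [ee]

theorem grad_norm (u : E2 → ℝ) (x : E2) : ‖gradient u x‖ = ‖fderiv ℝ u x‖ := by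
  simp [gradient]

theorem ap_le (L : E2 →L[ℝ] ℝ) (i : Fin 2) : |L (ee i)| ≤ ‖L‖ := by
  have := L.le_opNorm (ee i)
  rwa [ee_norm, mul_one, Real.norm_eq_abs] at this

theorem jj_le (u : E2 → ℝ) (x : E2) : ‖jj u x‖ ≤ 2 * ‖fderiv ℝ u x‖ := by
  unfold jj
  refine (norm_sub_le _ _).trans ?_
  rw [norm_smul, norm_smul, ee_norm, ee_norm, Real.norm_eq_abs, Real.norm_eq_abs]
  linarith [ap_le (fderiv ℝ u x) 0, ap_le (fderiv ℝ u x) 1]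

theorem jj_sub_le (u v : E2 → ℝ) (x : E2) :
    ‖jj u x - jj v x‖ ≤ 2 * ‖fderiv ℝ u x - fderiv ℝ v x‖ := by
  have : jj u x - jj v x = (fderiv ℝ u x - fderiv ℝ v x) (ee 1) • ee 0 -
      (fderiv ℝ u x - fderiv ℝ v x) (ee 0) • ee 1 := by
    simp only [jj, sub_apply, sub_smul]; abel
  rw [this]
  refine (norm_sub_le _ _).trans ?_
  rw [norm_smul, norm_smul, ee_norm, ee_norm, Real.norm_eq_abs, Real.norm_eq_abs]
  linarith [ap_le (fderiv ℝ u x - fderiv ℝ v x) 0, ap_le (fderiv ℝ u x - fderiv ℝ v x) 1]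

theorem W_lip (s t M N : ℝ) (hs : 0 ≤ s) (ht : 0 ≤ t) (hsM : s ≤ M) (htM : t ≤ M)
    (h : |s - t| ≤ N) :
    |Real.sqrt (1 + s^2)^3 - Real.sqrt (1 + t^2)^3| ≤ 3 * (1 + M)^2 * N := by
  have hP : Real.sqrt (1 + s^2) ^ 2 = 1 + s^2 := Real.sq_sqrt (by positivity)
  have hQ : Real.sqrt (1 + t^2) ^ 2 = 1 + t^2 := Real.sq_sqrt (by positivity)
  have hP0 : 0 < Real.sqrt (1 + s^2) := Real.sqrt_pos.2 (by positivity)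
  have hQ0 : 0 < Real.sqrt (1 + t^2) := Real.sqrt_pos.2 (by positivity)
  generalize Real.sqrt (1 + s^2) = P at *
  generalize Real.sqrt (1 + t^2) = Q at *
  have hPs : s ≤ P := by nlinarith
  have hQt : t ≤ Q := by nlinarith
  have hPM : P ≤ 1 + M := by nlinarith
  have hQM : Q ≤ 1 + M := by nlinarith
  have h1 : |P - Q| * (P + Q) = |s - t| * (s + t) := by
    rw [← abs_of_pos (add_pos hP0 hQ0), ← abs_mul, ← abs_of_nonneg (add_nonneg hs ht), ← abs_mul]
    congr 1
    nlinarith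
  have h2 : |P - Q| ≤ |s - t| := by
    by_contra! hc
    have : |s - t| * (s + t) ≤ |s - t| * (P + Q) := by gcongr
    have : |s - t| * (P + Q) < |P - Q| * (P + Q) := by
      apply mul_lt_mul_of_pos_right hc; linarith
    linarith
  have h3 : P^3 - Q^3 = (P - Q) * (P^2 + P*Q + Q^2) := by ring
  rw [h3, abs_mul, abs_of_pos (by positivity : 0 < P^2 + P*Q + Q^2)]
  have h4 : P^2 + P*Q + Q^2 ≤ 3 * (1+M)^2 := by nlinarith
  calc _ ≤ N * (3 * (1+M)^2) := by
        apply mul_le_mul (h2.trans h) h4 (by positivity) ((abs_nonneg _).trans h)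
    _ = _ := by ring

theorem inner_ee (x : E2) (i : Fin 2) : inner ℝ x (ee i) = x i := by
  rw [ee, EuclideanSpace.inner_single_right]; simp

theorem key (u v : E2 → ℝ) (x c : E2) (hu : ContDiffAt ℝ 2 u x) (hv : ContDiffAt ℝ 2 v x)
    (α k ε M H₁ H₂ : ℝ) (hα : 0 < α) (hε : 0 < ε)
    (hmin : IsLocalMin (fun y => (u y - v y) - ε * (Real.exp (-α * ‖y - c‖^2) - k)) x)
    (hMu : ‖fderiv ℝ u x‖ ≤ M) (hMv : ‖fderiv ℝ v x‖ ≤ M) (hMv2 : ‖fderiv ℝ (fderiv ℝ v) x‖ ≤ M)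
    (hH : H₁ ≤ H₂) (h1 : cmcOp u x = 2 * H₁) (h2 : cmcOp v x = 2 * H₂)
    (hbig : 2 + 4 * M^2 + (6 * |H₂| * (1 + M)^2 + 8 * M^2) * ‖x - c‖ < 2 * α * ‖x - c‖^2) :
    False := by
  have hM : 0 ≤ M := (norm_nonneg _).trans hMu
  set h : E2 → ℝ := fun y => Real.exp (-α * ‖y - c‖^2) - k with hh
  have hhC : ContDiff ℝ 2 h := by
    simp only [hh]
    exact ((contDiff_const.mul ((contDiff_id.sub contDiff_const).norm_sq ℝ)).exp).sub contDiff_const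
  have hfC : ContDiffAt ℝ 2 (fun y => (u y - v y) - ε * h y) x :=
    (hu.sub hv).sub (contDiffAt_const.mul hhC.contDiffAt)
  have hev : ∀ᶠ y in nhds x, fderiv ℝ (fun y => (u y - v y) - ε * h y) y =
      (fderiv ℝ u y - fderiv ℝ v y) - ε • fderiv ℝ h y := by
    filter_upwards [hu.eventually (by simp), hv.eventually (by simp)] with y hy1 hy2
    exact ((((hy1.differentiableAt (by simp)).hasFDerivAt.sub
      (hy2.differentiableAt (by simp)).hasFDerivAt)).sub
      ((hhC.differentiable (by simp) y).hasFDerivAt.const_mul ε)).fderiv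
  have dd : ∀ {g : E2 → ℝ}, ContDiffAt ℝ 2 g x → HasFDerivAt (fderiv ℝ g) (fderiv ℝ (fderiv ℝ g) x) x :=
    fun hg => ((hg.fderiv_right (m := 1) (by norm_num)).differentiableAt (by simp)).hasFDerivAt
  have h2d : fderiv ℝ (fderiv ℝ (fun y => (u y - v y) - ε * h y)) x =
      (fderiv ℝ (fderiv ℝ u) x - fderiv ℝ (fderiv ℝ v) x) - ε • fderiv ℝ (fderiv ℝ h) x := by
    rw [Filter.EventuallyEq.fderiv_eq hev]
    exact (((dd hu).sub (dd hv)).sub ((dd hhC.contDiffAt).const_smul ε)).fderiv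
  have hge : ∀ ξ, fderiv ℝ (fderiv ℝ v) x ξ ξ + ε * fderiv ℝ (fderiv ℝ h) x ξ ξ ≤
      fderiv ℝ (fderiv ℝ u) x ξ ξ := fun ξ => by
    have := sec_min hfC hmin ξ
    rw [h2d] at this
    simp only [sub_apply, smul_apply, smul_eq_mul] at this
    linarith
  have hD1 : fderiv ℝ u x - fderiv ℝ v x = ε • fderiv ℝ h x := by
    have := hmin.fderiv_eq_zero
    rw [hev.self_of_nhds] at this
    exact sub_eq_zero.1 this
  set e := Real.exp (-α * ‖x - c‖^2) with he
  have he0 : 0 < e := Real.exp_pos _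
  have hN : ‖fderiv ℝ u x - fderiv ℝ v x‖ = 2 * α * ε * e * ‖x - c‖ := by
    rw [hD1, (bar_d α k c x).fderiv, norm_smul, norm_smul, innerSL_apply_norm, ← he]
    simp only [Real.norm_eq_abs, abs_mul, abs_of_pos hα, abs_of_pos hε, abs_of_pos he0]
    norm_num
    ring
  have hTh : ∀ ξ η, fderiv ℝ (fderiv ℝ h) x ξ η = e * (4 * α^2 * inner ℝ (x - c) ξ * inner ℝ (x - c) η
        - 2 * α * inner ℝ ξ η) := fun ξ η => bar_dd α k c x ξ η
  set N := ‖fderiv ℝ u x - fderiv ℝ v x‖ with hNdef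
  have hPu := cmc_eq u x hu
  have hPv := cmc_eq v x hv
  rw [h1, grad_norm] at hPu
  rw [h2, grad_norm] at hPv
  have hW := W_lip ‖fderiv ℝ u x‖ ‖fderiv ℝ v x‖ M N (norm_nonneg _) (norm_nonneg _) hMu hMv
    (abs_norm_sub_norm_le _ _)
  have hPpos : 0 ≤ Real.sqrt (1 + ‖fderiv ℝ u x‖^2)^3 := by positivity
  set P := Real.sqrt (1 + ‖fderiv ℝ u x‖^2)^3
  set Q := Real.sqrt (1 + ‖fderiv ℝ v x‖^2)^3
  set B := fderiv ℝ (fderiv ℝ v) x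
  have hju : ‖jj u x‖ ≤ 2 * M := (jj_le u x).trans (by linarith)
  have hjv : ‖jj v x‖ ≤ 2 * M := (jj_le v x).trans (by linarith)
  have hjs : ‖jj u x - jj v x‖ ≤ 2 * N := jj_sub_le u v x
  have hB : |B (jj u x) (jj u x) - B (jj v x) (jj v x)| ≤ 8 * M^2 * N := by
    have e1 : B (jj u x) (jj u x) - B (jj v x) (jj v x) =
        B (jj u x - jj v x) (jj u x) + B (jj v x) (jj u x - jj v x) := by
      simp only [map_sub, sub_apply]; ring
    rw [e1]
    have a1 := B.le_opNorm₂ (jj u x - jj v x) (jj u x)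
    have a2 := B.le_opNorm₂ (jj v x) (jj u x - jj v x)
    have b1 : ‖B‖ * ‖jj u x - jj v x‖ * ‖jj u x‖ ≤ M * (2*N) * (2*M) := by gcongr
    have b2 : ‖B‖ * ‖jj v x‖ * ‖jj u x - jj v x‖ ≤ M * (2*M) * (2*N) := by gcongr
    rw [Real.norm_eq_abs] at a1 a2
    refine (abs_add_le _ _).trans ?_
    linarith
  have g0 := hge (ee 0)
  have g1 := hge (ee 1)
  have g2 := hge (jj u x)
  rw [hTh, inner_ee, real_inner_self_eq_norm_sq, ee_norm] at g0 g1
  rw [hTh, real_inner_self_eq_norm_sq] at g2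
  have hnsq : ‖x - c‖^2 = (x - c) 0 ^ 2 + (x - c) 1 ^ 2 := by
    rw [EuclideanSpace.norm_sq_eq]; simp
  have hj2 : ‖jj u x‖^2 ≤ 4 * M^2 := by nlinarith [norm_nonneg (jj u x)]
  have hHP : 2 * H₁ * P - 2 * H₂ * Q ≤ 2 * |H₂| * (3 * (1 + M)^2 * N) := by
    have c1 : 2 * H₁ * P ≤ 2 * H₂ * P := by gcongr
    have c2 : H₂ * (P - Q) ≤ |H₂| * (3 * (1 + M)^2 * N) := by
      refine (le_abs_self _).trans ?_
      rw [abs_mul]; gcongr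
    linarith
  have hB' := (abs_le.1 hB).1
  have f2 : ε * (e * (-(2 * α * (4 * M^2)))) ≤ ε * (e * (4 * α^2 * inner ℝ (x - c) (jj u x) * inner ℝ (x - c) (jj u x)
        - 2 * α * ‖jj u x‖^2)) := by
    gcongr
    have : 0 ≤ 4 * α^2 * (inner ℝ (x - c) (jj u x) * inner ℝ (x - c) (jj u x)) :=
      mul_nonneg (by positivity) (mul_self_nonneg _)
    have : 2 * α * ‖jj u x‖^2 ≤ 2 * α * (4 * M^2) := by gcongr
    linarith
  have fin : ε * e * (4 * α^2 * ‖x - c‖^2 - 4 * α - 8 * α * M^2) ≤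
      (6 * |H₂| * (1 + M)^2 + 8 * M^2) * N := by
    rw [hnsq]; linarith
  rw [hN] at fin
  have pos : 0 < ε * e * (2 * α) := by positivity
  have := mul_lt_mul_of_pos_left hbig pos
  linarith

set_option maxHeartbeats 1600000 in
/-- Interior tangency principle for constant-mean-curvature graphs. -/
theorem interior_tangency_principle
    (Ω : Set (EuclideanSpace ℝ (Fin 2))) (hΩopen : IsOpen Ω) (hΩconn : IsConnected Ω)
    (p₀ : EuclideanSpace ℝ (Fin 2)) (hp₀ : p₀ ∈ Ω)
    (u v : EuclideanSpace ℝ (Fin 2) → ℝ)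
    (hu : ContDiffOn ℝ 2 u Ω) (hv : ContDiffOn ℝ 2 v Ω)
    (huv : ∀ x ∈ Ω, v x ≤ u x) (htouch : u p₀ = v p₀)
    (H₁ H₂ : ℝ) (hH : H₁ ≤ H₂)
    (hpdeu : ∀ x ∈ Ω, cmcOp u x = 2 * H₁)
    (hpdev : ∀ x ∈ Ω, cmcOp v x = 2 * H₂) :
    (∃ V : Set (EuclideanSpace ℝ (Fin 2)),
        IsOpen V ∧ p₀ ∈ V ∧ V ⊆ Ω ∧ Set.EqOn u v V) ∧ H₁ = H₂ := by
  have hCu : ∀ x ∈ Ω, ContDiffAt ℝ 2 u x := fun x hx => hu.contDiffAt (hΩopen.mem_nhds hx)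
  have hCv : ∀ x ∈ Ω, ContDiffAt ℝ 2 v x := fun x hx => hv.contDiffAt (hΩopen.mem_nhds hx)
  obtain ⟨R, hR, hRΩ⟩ := Metric.nhds_basis_closedBall.mem_iff.1 (hΩopen.mem_nhds hp₀)
  have hK : IsCompact (Metric.closedBall p₀ R) := isCompact_closedBall p₀ R
  have bdd : ∀ {F : Type} [NormedAddCommGroup F] (g : E2 → F), (∀ x ∈ Ω, ContinuousAt g x) →
      ∃ C, ∀ x ∈ Metric.closedBall p₀ R, ‖g x‖ ≤ C := fun g hg =>
    hK.exists_bound_of_continuousOn fun x hx => (hg x (hRΩ hx)).continuousWithinAt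
  obtain ⟨M1, hM1⟩ := bdd (fderiv ℝ u) fun x hx =>
    ((hCu x hx).fderiv_right (m := 1) (by norm_num)).continuousAt
  obtain ⟨M2, hM2⟩ := bdd (fderiv ℝ v) fun x hx =>
    ((hCv x hx).fderiv_right (m := 1) (by norm_num)).continuousAt
  obtain ⟨M3, hM3⟩ := bdd (fderiv ℝ (fderiv ℝ v)) fun x hx =>
    (((hCv x hx).fderiv_right (m := 1) (by norm_num)).fderiv_right (m := 0) (by norm_num)).continuousAt
  set M := max M1 (max M2 M3) with hM
  have hwc : ContinuousOn (fun x => u x - v x) Ω := hu.continuousOn.sub hv.continuousOn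
  have main : Set.EqOn u v (Metric.ball p₀ (R/2)) := by
    intro y hy
    by_contra hne
    have hyΩ : y ∈ Ω := hRΩ (Metric.ball_subset_closedBall (Metric.ball_subset_ball (by linarith) hy))
    -- nearest zero
    set Z := Metric.closedBall p₀ R ∩ (fun x => u x - v x) ⁻¹' {0} with hZ
    have hZc : IsCompact Z := hK.of_isClosed_subset
      ((hwc.mono hRΩ).preimage_isClosed_of_isClosed Metric.isClosed_closedBall isClosed_singleton)
      Set.inter_subset_left
    have hp₀Z : p₀ ∈ Z := ⟨Metric.mem_closedBall_self hR.le, by simp [htouch]⟩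
    obtain ⟨z, hzZ, hzmin⟩ := hZc.exists_isMinOn ⟨p₀, hp₀Z⟩
      (f := fun x => dist x y) (by fun_prop)
    have hzmin' : ∀ x ∈ Z, dist z y ≤ dist x y := fun x hx => hzmin hx
    have hzw : u z - v z = 0 := hzZ.2
    set r := dist z y with hr
    have hrR : r < R/2 := by
      have := hzmin' p₀ hp₀Z
      rw [dist_comm p₀ y] at this
      exact this.trans_lt hy
    have hr0 : 0 < r := by
      rw [hr, dist_pos]
      rintro rfl
      exact hne (by linarith)
    have hyp : dist y p₀ < R/2 := hy
    have hpos : ∀ x, dist x y < r → 0 < u x - v x := by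
      intro x hx
      have hxK : x ∈ Metric.closedBall p₀ R := by
        rw [Metric.mem_closedBall]
        linarith [dist_triangle x y p₀]
      have h0 : 0 ≤ u x - v x := by linarith [huv x (hRΩ hxK)]
      refine lt_of_le_of_ne h0 fun h => ?_
      have := hzmin' x ⟨hxK, h.symm⟩
      linarith
    set c : E2 := (1/2 : ℝ) • (y + z) with hc
    set s := r / 2 with hs
    have hs0 : 0 < s := by positivity
    have hzc' : z - c = (1/2 : ℝ) • (z - y) := by rw [hc]; module
    have hcy' : c - y = (1/2 : ℝ) • (z - y) := by rw [hc]; module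
    have hzc : ‖z - c‖ = s := by
      rw [hzc', norm_smul, ← dist_eq_norm, ← hr, hs]; norm_num; ring
    have hcy : ‖c - y‖ = s := by rw [hcy', ← hzc', hzc]
    have hpos' : ∀ x, ‖x - c‖ ≤ s → x ≠ z → 0 < u x - v x := by
      intro x hx hxz
      apply hpos
      by_contra! hge
      rw [dist_eq_norm] at hge
      have pl := parallelogram_law_with_norm ℝ (x - c) (c - y)
      have e1 : x - c + (c - y) = x - y := by abel
      have e2 : x - c - (c - y) = x - z := by rw [hcy', ← hzc']; abel
      rw [e1, e2, hcy] at pl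
      have h4 : ‖x - z‖ * ‖x - z‖ ≤ 0 := by
        nlinarith [norm_nonneg (x - c), norm_nonneg (x - y)]
      have h5 : ‖x - z‖ = 0 := by nlinarith [norm_nonneg (x - z)]
      exact hxz (sub_eq_zero.1 (norm_eq_zero.1 h5))
    have hzp : dist z p₀ < R := by linarith [dist_triangle z y p₀]
    set ρ := min (s/2) (R - dist z p₀) with hρ
    have hρ0 : 0 < ρ := lt_min (by positivity) (by linarith)
    have hρs : ρ ≤ s/2 := min_le_left _ _
    have hρR : ρ ≤ R - dist z p₀ := min_le_right _ _
    have hballK : Metric.closedBall z ρ ⊆ Metric.closedBall p₀ R :=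
      Metric.closedBall_subset_closedBall' (by linarith)
    set C := 6 * |H₂| * (1 + M)^2 + 8 * M^2 with hC
    have hC0 : 0 ≤ C := by positivity
    set α := (2 * (2 + 4 * M^2 + C * (2 * s)) + 1) / s^2 with hα
    have hα0 : 0 < α := by positivity
    have hαs : α * s^2 = 2 * (2 + 4 * M^2 + C * (2 * s)) + 1 := by rw [hα]; field_simp
    set k := Real.exp (-α * s^2) with hk
    set S := Metric.sphere z ρ ∩ Metric.closedBall c s with hS
    have hSc : IsCompact S := (isCompact_sphere z ρ).inter_right Metric.isClosed_closedBall
    have hSK : S ⊆ Ω := fun x hx => hRΩ (hballK (Metric.sphere_subset_closedBall hx.1))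
    have hm : ∃ m > 0, ∀ x ∈ S, m ≤ u x - v x := by
      rcases S.eq_empty_or_nonempty with h | h
      · exact ⟨1, one_pos, by simp [h]⟩
      · obtain ⟨x, hx, hxm⟩ := hSc.exists_isMinOn h (hwc.mono hSK)
        refine ⟨u x - v x, hpos' x ?_ ?_, fun x' hx' => hxm hx'⟩
        · rw [← dist_eq_norm]; exact hx.2
        · rintro rfl
          have := hx.1
          simp at this
          linarith
    obtain ⟨m, hm0, hm⟩ := hm
    set f : E2 → ℝ := fun y => (u y - v y) - (m/2) * (Real.exp (-α * ‖y - c‖^2) - k) with hf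
    have hfc : ContinuousOn f (Metric.closedBall z ρ) := by
      refine (hwc.mono (hballK.trans hRΩ)).sub (Continuous.continuousOn ?_)
      fun_prop
    obtain ⟨x, hx, hxm⟩ := (isCompact_closedBall z ρ).exists_isMinOn
      ⟨z, Metric.mem_closedBall_self hρ0.le⟩ hfc
    have hfz : f z = 0 := by simp only [hf]; rw [hzw, hzc, hk]; ring
    have hfx : f x ≤ 0 := hfz ▸ hxm (Metric.mem_closedBall_self hρ0.le)
    have hxΩ : x ∈ Ω := hRΩ (hballK hx)
    have hxb : x ∈ Metric.ball z ρ := by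
      by_contra hnb
      have hxs : x ∈ Metric.sphere z ρ := by
        rw [Metric.mem_sphere]
        rw [Metric.mem_ball, not_lt] at hnb
        exact le_antisymm hx hnb
      have hk0 : 0 < k := Real.exp_pos _
      have : 0 < f x := by
        simp only [hf]
        by_cases hxc : ‖x - c‖ ≤ s
        · have h1 := hm x ⟨hxs, by rw [Metric.mem_closedBall, dist_eq_norm]; exact hxc⟩
          have h2 : Real.exp (-α * ‖x - c‖^2) ≤ 1 := by
            rw [Real.exp_le_one_iff]
            have := mul_nonneg hα0.le (sq_nonneg ‖x - c‖)
            linarith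
          have h3 := mul_le_mul_of_nonneg_left h2 (half_pos hm0).le
          have h4 := mul_pos (half_pos hm0) hk0
          linarith
        · push Not at hxc
          have h1 := huv x hxΩ
          have h2 : Real.exp (-α * ‖x - c‖^2) < k := by
            rw [hk, Real.exp_lt_exp]
            have : s^2 < ‖x - c‖^2 := by gcongr
            have := mul_lt_mul_of_pos_left this hα0
            linarith
          have h3 := mul_lt_mul_of_pos_left h2 (half_pos hm0)
          linarith
      linarith
    have hloc : IsLocalMin f x :=
      hxm.isLocalMin (Filter.mem_of_superset (Metric.isOpen_ball.mem_nhds hxb)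
        Metric.ball_subset_closedBall)
    have hxz : ‖x - z‖ ≤ s/2 := by rw [← dist_eq_norm]; exact (Metric.mem_closedBall.1 hx).trans hρs
    have hlo : s/2 ≤ ‖x - c‖ := by
      have := norm_sub_le (x - c) (x - z)
      have e : x - c - (x - z) = z - c := by abel
      rw [e, hzc] at this
      linarith
    have hhi : ‖x - c‖ ≤ 2 * s := by
      have := norm_add_le (x - z) (z - c)
      have e : x - z + (z - c) = x - c := by abel
      rw [e, hzc] at this
      linarith
    refine key u v x c (hCu x hxΩ) (hCv x hxΩ) α k (m/2) M H₁ H₂ hα0 (by positivity) hloc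
      ((hM1 x (hballK hx)).trans (le_max_left _ _))
      ((hM2 x (hballK hx)).trans ((le_max_left _ _).trans (le_max_right _ _)))
      ((hM3 x (hballK hx)).trans ((le_max_right _ _).trans (le_max_right _ _)))
      hH (hpdeu x hxΩ) (hpdev x hxΩ) ?_
    rw [← hC]
    have h1 : C * ‖x - c‖ ≤ C * (2 * s) := by gcongr
    have h2 : α * (s/2)^2 ≤ α * ‖x - c‖^2 := by gcongr
    linarith
  refine ⟨⟨Metric.ball p₀ (R/2), Metric.isOpen_ball, Metric.mem_ball_self (by positivity),
    (Metric.ball_subset_closedBall.trans (Metric.closedBall_subset_closedBall (by linarith))).trans hRΩ,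
    main⟩, ?_⟩
  have hev : u =ᶠ[nhds p₀] v :=
    Filter.mem_of_superset (Metric.ball_mem_nhds p₀ (by positivity)) main
  have hgr : gradient u =ᶠ[nhds p₀] gradient v := by
    filter_upwards [hev.fderiv (𝕜 := ℝ)] with x hx
    simp only [gradient, hx]
  have : cmcOp u p₀ = cmcOp v p₀ := by
    unfold cmcOp vecDiv
    have e : (fun y => (Real.sqrt (1 + ‖gradient u y‖ ^ 2))⁻¹ • gradient u y) =ᶠ[nhds p₀]
        (fun y => (Real.sqrt (1 + ‖gradient v y‖ ^ 2))⁻¹ • gradient v y) := by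
      filter_upwards [hgr] with y hy
      rw [hy]
    rw [e.fderiv_eq]
  rw [hpdeu p₀ hp₀, hpdev p₀ hp₀] at this
  linarith
end

section
/- Boundary tangency principle for constant-mean-curvature graphs: Let r > 0, let D⁺ = {x ∈ ℝ² : |x| < r, x₂ ≥ 0} be the closed upper half-disk, and let u, v : D⁺ → ℝ be functions that are C² on D⁺ (i.e., extend C² to a neighborhood), with u ≥ v on D⁺, u(0) = v(0), and ∇u(0) = ∇v(0). Suppose there are real constants H₁ ≤ H₂ with div(∇u/√(1+|∇u|²)) = 2H₁ and div(∇v/√(1+|∇v|²)) = 2H₂ on the interior {x ∈ ℝ² : |x| < r, x₂ > 0}. Then u and v coincide on a neighborhood of the origin in D⁺. -/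
open Real

local notation "EE" => EuclideanSpace ℝ (Fin 2)
open Topology Filter

noncomputable def rotJ (p : EE) : EE := !₂[-p 1, p 0]

lemma norm_rotJ (p : EE) : ‖rotJ p‖ = ‖p‖ := by
  simp [rotJ, EuclideanSpace.norm_eq, Fin.sum_univ_two, add_comm]

lemma rotJ_sub (p q : EE) : rotJ p - rotJ q = rotJ (p - q) := by
  ext i; fin_cases i <;> simp [rotJ]; ring

/-- second-order necessary condition -/
lemma second_nec (f g : ℝ → ℝ) (b : ℝ) (hf : ∀ᶠ t in 𝓝 (0:ℝ), HasDerivAt f (g t) t)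
    (hg : HasDerivAt g b 0) (hm : IsLocalMin f 0) : g 0 = 0 ∧ 0 ≤ b := by
  have h0 : g 0 = 0 := hm.hasDerivAt_eq_zero hf.self_of_nhds
  refine ⟨h0, ?_⟩
  by_contra hb
  push Not at hb
  have hfg : deriv f =ᶠ[𝓝 0] g := hf.mono fun t ht => ht.deriv
  have hd2 : deriv (deriv f) 0 = b := by rw [hfg.deriv_eq, hg.deriv]
  have hmax : IsLocalMax f 0 :=
    isLocalMax_of_deriv_deriv_neg (by rw [hd2]; exact hb)
      (by rw [hf.self_of_nhds.deriv, h0]) hf.self_of_nhds.continuousAt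
  have hc : f =ᶠ[𝓝 0] fun _ => f 0 := by
    filter_upwards [hm, hmax] with t h1 h2 using le_antisymm h2 h1
  have : deriv f =ᶠ[𝓝 0] fun _ => 0 := by
    have := hc.deriv
    simpa using this
  have := this.deriv_eq
  rw [hd2] at this
  simp at this
  linarith

noncomputable def hessQ (u : EE → ℝ) (x q : EE) : ℝ :=
  fderiv ℝ (fderiv ℝ u) x (EuclideanSpace.single 0 1) (EuclideanSpace.single 0 1) +
  fderiv ℝ (fderiv ℝ u) x (EuclideanSpace.single 1 1) (EuclideanSpace.single 1 1) +
  fderiv ℝ (fderiv ℝ u) x q q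

lemma grad_apply (u : EE → ℝ) (x : EE) (i : Fin 2) :
    gradient u x i = fderiv ℝ u x (EuclideanSpace.single i 1) := by
  have : fderiv ℝ u x (EuclideanSpace.single i 1) = inner ℝ (gradient u x) (EuclideanSpace.single i 1) := by
    simp only [gradient, InnerProductSpace.toDual_symm_apply]
  rw [this, EuclideanSpace.inner_single_right]; simp

lemma cmc_formula (u : EE → ℝ) (x : EE) (hu : ContDiffAt ℝ 2 u x) :
    hessQ u x (rotJ (gradient u x)) = cmcOp u x * (√(1 + ‖gradient u x‖ ^ 2)) ^ 3 := by
  have hB : DifferentiableAt ℝ (fderiv ℝ u) x :=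
    (hu.fderiv_right (m := 1) (by norm_num)).differentiableAt (by norm_num)
  set L : (EE →L[ℝ] ℝ) →L[ℝ] EE :=
    (ContinuousLinearMap.apply ℝ ℝ (EuclideanSpace.single 0 1 : EE)).smulRight (EuclideanSpace.single 0 1 : EE) +
    (ContinuousLinearMap.apply ℝ ℝ (EuclideanSpace.single 1 1 : EE)).smulRight (EuclideanSpace.single 1 1 : EE) with hL
  have hLa : ∀ f i, L f i = f (EuclideanSpace.single i 1) := by
    intro f i
    fin_cases i <;> simp [hL]
  have hgL : gradient u = fun y => L (fderiv ℝ u y) := by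
    funext y; ext i; rw [grad_apply, hLa]
  have hG : HasFDerivAt (gradient u) (L.comp (fderiv ℝ (fderiv ℝ u) x)) x := by
    rw [hgL]
    exact L.hasFDerivAt.comp x hB.hasFDerivAt
  set B := fderiv ℝ (fderiv ℝ u) x with hBdef
  have hLB : ∀ e i, (L.comp B) e i = B e (EuclideanSpace.single i 1) := by
    intro e i
    exact hLa _ _
  set D := L.comp B with hD
  set p := gradient u x with hp
  have hpos : 0 < 1 + ‖p‖ ^ 2 := by positivity
  have hW : 0 < √(1 + ‖p‖ ^ 2) := Real.sqrt_pos.2 hpos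
  have hs := (hasDerivAt_inv hW.ne').comp_hasFDerivAt x ((hG.norm_sq.const_add 1).sqrt hpos.ne')
  have hF := hs.smul hG
  have hsq : √(1 + ‖p‖ ^ 2) ^ 2 = 1 + (p 0 ^ 2 + p 1 ^ 2) := by
    rw [Real.sq_sqrt hpos.le, EuclideanSpace.norm_sq_eq]; simp [Fin.sum_univ_two]
  have hq : rotJ p = (-p 1) • EuclideanSpace.single 0 1 + (p 0) • EuclideanSpace.single 1 1 := by
    ext i; fin_cases i <;> simp [rotJ]
  have hF' : fderiv ℝ (fun y => (Real.sqrt (1 + ‖gradient u y‖ ^ 2))⁻¹ • gradient u y) x = _ := hF.fderiv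
  rw [cmcOp, vecDiv, hF']
  rw [hessQ, hq]
  simp only [Fin.sum_univ_two, map_add, map_smul, add_apply, smul_apply,
    ContinuousLinearMap.smulRight_apply, PiLp.add_apply, PiLp.smul_apply, hLB, smul_eq_mul,
    ContinuousLinearMap.comp_apply, innerSL_apply_apply]
  have hin : ∀ e, inner ℝ p (D e) =
      p 0 * B e (EuclideanSpace.single 0 1) + p 1 * B e (EuclideanSpace.single 1 1) := by
    intro e
    rw [PiLp.inner_apply]
    simp only [Fin.sum_univ_two, hLB]
    simp [mul_comm]
  simp only [Function.comp, ← hp, ← hBdef, hin]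
  rw [nsmul_eq_mul, nsmul_eq_mul]
  push_cast
  generalize √(1 + ‖p‖ ^ 2) = W at hW hsq ⊢
  generalize B (EuclideanSpace.single 0 1) (EuclideanSpace.single 0 1) = b00
  generalize B (EuclideanSpace.single 0 1) (EuclideanSpace.single 1 1) = b01
  generalize B (EuclideanSpace.single 1 1) (EuclideanSpace.single 0 1) = b10
  generalize B (EuclideanSpace.single 1 1) (EuclideanSpace.single 1 1) = b11
  field_simp
  rw [hsq]
  ring

lemma barrier_min (u v : EE → ℝ) (c x : EE) (α ε k : ℝ) (hu : ContDiffAt ℝ 2 u x)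
    (hv : ContDiffAt ℝ 2 v x)
    (hm : IsLocalMin (fun y => u y - v y - ε * (exp (-α * ‖y - c‖ ^ 2) - k)) x) (e : EE) :
    fderiv ℝ u x e - fderiv ℝ v x e
      = ε * (-(2 * α * inner ℝ (x - c) e)) * exp (-α * ‖x - c‖ ^ 2) ∧
    ε * ((4 * α ^ 2 * inner ℝ (x - c) e ^ 2 - 2 * α * ‖e‖ ^ 2) * exp (-α * ‖x - c‖ ^ 2)) ≤
      fderiv ℝ (fderiv ℝ u) x e e - fderiv ℝ (fderiv ℝ v) x e e := by
  set s := inner ℝ (x - c) e with hs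
  set ℓ : ℝ → EE := fun t => x + t • e with hℓ
  have hℓ0 : ℓ 0 = x := by simp [hℓ]
  have hℓd : ∀ t, HasDerivAt ℓ e t := fun t => by
    exact (((hasDerivAt_id t).smul_const e).const_add x).congr_deriv (by simp)
  have hℓc : Tendsto ℓ (𝓝 0) (𝓝 x) := by
    have := (hℓd 0).continuousAt.tendsto
    rwa [hℓ0] at this
  have hnorm : ∀ t, ‖ℓ t - c‖ ^ 2 = ‖x - c‖ ^ 2 + 2 * t * s + t ^ 2 * ‖e‖ ^ 2 := by
    intro t
    have : ℓ t - c = (x - c) + t • e := by simp [hℓ]; abel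
    rw [this, norm_add_sq_real, inner_smul_right, norm_smul, mul_pow]
    simp [hs]; ring
  have key : ∀ w : EE → ℝ, ContDiffAt ℝ 2 w x →
      (∀ᶠ t in 𝓝 (0:ℝ), HasDerivAt (fun t => w (ℓ t)) (fderiv ℝ w (ℓ t) e) t) ∧
      HasDerivAt (fun t => fderiv ℝ w (ℓ t) e) (fderiv ℝ (fderiv ℝ w) x e e) 0 := by
    intro w hw
    constructor
    · have h1 : ∀ᶠ y in 𝓝 x, DifferentiableAt ℝ w y := by
        filter_upwards [hw.eventually (by simp)] with y hy
        exact hy.differentiableAt (by norm_num)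
      filter_upwards [hℓc.eventually h1] with t ht
      exact ht.hasFDerivAt.comp_hasDerivAt t (hℓd t)
    · have hB : DifferentiableAt ℝ (fderiv ℝ w) (ℓ 0) := by
        rw [hℓ0]
        exact (hw.fderiv_right (m := 1) (by norm_num)).differentiableAt (by norm_num)
      have h2 := hB.hasFDerivAt.comp_hasDerivAt 0 (hℓd 0)
      rw [hℓ0] at h2
      have h3 := h2.clm_apply (hasDerivAt_const (0:ℝ) e)
      simpa using h3
  obtain ⟨u1, u2⟩ := key u hu
  obtain ⟨v1, v2⟩ := key v hv
  set q : ℝ → ℝ := fun t => -α * (‖x - c‖ ^ 2 + 2 * t * s + t ^ 2 * ‖e‖ ^ 2) with hq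
  have hqd : ∀ t, HasDerivAt q (-α * (2 * s + 2 * t * ‖e‖ ^ 2)) t := by
    intro t
    have h1 := ((((hasDerivAt_id t).const_mul 2).mul_const s).const_add (‖x - c‖ ^ 2)).add
      (((hasDerivAt_id t).pow 2).mul_const (‖e‖ ^ 2))
    have := h1.const_mul (-α)
    exact this.congr_deriv (by simp)
  have hgd : HasDerivAt (fun t => -α * (2 * s + 2 * t * ‖e‖ ^ 2)) (-α * (2 * ‖e‖ ^ 2)) 0 := by
    have := ((((hasDerivAt_id (0:ℝ)).const_mul 2).mul_const (‖e‖ ^ 2)).const_add (2 * s)).const_mul (-α)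
    exact this.congr_deriv (by simp)
  have hmin : IsLocalMin (fun t => u (ℓ t) - v (ℓ t) - ε * (exp (q t) - k)) 0 := by
    have h := hℓc.eventually hm
    filter_upwards [h] with t ht
    have h0 := hnorm 0
    rw [hℓ0] at h0
    simp only [hq, ← hnorm, hℓ0]
    exact ht
  have hf : ∀ᶠ t in 𝓝 (0:ℝ), HasDerivAt (fun t => u (ℓ t) - v (ℓ t) - ε * (exp (q t) - k))
      (fderiv ℝ u (ℓ t) e - fderiv ℝ v (ℓ t) e
        - ε * (exp (q t) * (-α * (2 * s + 2 * t * ‖e‖ ^ 2)))) t := by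
    filter_upwards [u1, v1] with t h1 h2
    exact (h1.sub h2).sub (((hqd t).exp.sub_const k).const_mul ε)
  have hg := (u2.sub v2).sub (((hqd 0).exp.mul hgd).const_mul ε)
  obtain ⟨r1, r2⟩ := second_nec _ _ _ hf hg hmin
  have hq0 : q 0 = -α * ‖x - c‖ ^ 2 := by simp [hq]
  rw [hq0] at r1 r2
  rw [hℓ0] at r1
  constructor
  · linear_combination r1
  · refine le_of_sub_nonneg (r2.trans (le_of_eq ?_))
    ring

lemma alg_bound (B : EE →L[ℝ] EE →L[ℝ] ℝ) (p q : EE) (G K H₁ H₂ : ℝ) (hH : H₁ ≤ H₂)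
    (hp : ‖p‖ ≤ G) (hq : ‖q‖ ≤ G) (hB : ‖B‖ ≤ K) :
    2 * H₁ * √(1 + ‖p‖ ^ 2) ^ 3 - 2 * H₂ * √(1 + ‖q‖ ^ 2) ^ 3 + B (rotJ q) (rotJ q)
      - B (rotJ p) (rotJ p) ≤ (6 * |H₁| * (1 + G) ^ 2 + 2 * K * G) * ‖p - q‖ := by
  have hG : 0 ≤ G := (norm_nonneg p).trans hp
  have hK : 0 ≤ K := (norm_nonneg B).trans hB
  have e1 : B (rotJ q) (rotJ q) - B (rotJ p) (rotJ p) ≤ 2 * K * G * ‖p - q‖ := by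
    have : B (rotJ q) (rotJ q) - B (rotJ p) (rotJ p) =
        B (rotJ (q - p)) (rotJ q) + B (rotJ p) (rotJ (q - p)) := by
      rw [← rotJ_sub]; simp
    rw [this]
    have h1 := (le_abs_self _).trans (B.le_opNorm₂ (rotJ (q - p)) (rotJ q))
    have h2 := (le_abs_self _).trans (B.le_opNorm₂ (rotJ p) (rotJ (q - p)))
    rw [norm_rotJ, norm_rotJ, norm_sub_rev] at h1 h2
    have h3 : ‖B‖ * ‖p - q‖ * ‖q‖ ≤ K * ‖p - q‖ * G := by gcongr
    have h4 : ‖B‖ * ‖p‖ * ‖p - q‖ ≤ K * G * ‖p - q‖ := by gcongr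
    linarith
  have hW : ∀ z : EE, ‖z‖ ≤ G → ‖z‖ ≤ √(1 + ‖z‖ ^ 2) ∧ 1 ≤ √(1 + ‖z‖ ^ 2) ∧
      √(1 + ‖z‖ ^ 2) ≤ 1 + G ∧ √(1 + ‖z‖ ^ 2) ^ 2 = 1 + ‖z‖ ^ 2 := by
    intro z hz
    have := norm_nonneg z
    refine ⟨Real.le_sqrt_of_sq_le (by linarith), Real.le_sqrt_of_sq_le (by nlinarith), ?_,
      Real.sq_sqrt (by positivity)⟩
    rw [Real.sqrt_le_left (by linarith)]
    nlinarith
  obtain ⟨a1, a2, a3, a4⟩ := hW p hp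
  obtain ⟨b1, b2, b3, b4⟩ := hW q hq
  generalize √(1 + ‖p‖ ^ 2) = a at *
  generalize √(1 + ‖q‖ ^ 2) = b at *
  have hd : |a - b| ≤ ‖p - q‖ := by
    refine le_trans ?_ (abs_norm_sub_norm_le p q)
    have h1 : (a - b) * (a + b) = (‖p‖ - ‖q‖) * (‖p‖ + ‖q‖) := by linarith
    have h2 : |a - b| * (a + b) = |‖p‖ - ‖q‖| * (‖p‖ + ‖q‖) := by
      have := congrArg abs h1
      rwa [abs_mul, abs_mul, abs_of_pos (by linarith : 0 < a + b),
        abs_of_nonneg (by positivity : 0 ≤ ‖p‖ + ‖q‖)] at this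
    have h3 : |‖p‖ - ‖q‖| * (‖p‖ + ‖q‖) ≤ |‖p‖ - ‖q‖| * (a + b) := by gcongr
    exact le_of_mul_le_mul_right (h2.trans_le h3) (by linarith)
  have e2 : 2 * H₁ * a ^ 3 - 2 * H₂ * b ^ 3 ≤ 6 * |H₁| * (1 + G) ^ 2 * ‖p - q‖ := by
    have h1 : 2 * H₁ * a ^ 3 - 2 * H₂ * b ^ 3 ≤ 2 * H₁ * (a ^ 3 - b ^ 3) := by
      have : 0 ≤ b ^ 3 := by positivity
      nlinarith
    have h2 : 2 * H₁ * (a ^ 3 - b ^ 3) ≤ 2 * (|H₁| * (|a - b| * (a ^ 2 + a * b + b ^ 2))) := by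
      have := le_abs_self (H₁ * ((a - b) * (a ^ 2 + a * b + b ^ 2)))
      rw [abs_mul, abs_mul, abs_of_nonneg (by positivity : 0 ≤ a ^ 2 + a * b + b ^ 2)] at this
      linarith
    have h3 : a ^ 2 + a * b + b ^ 2 ≤ 3 * (1 + G) ^ 2 := by nlinarith
    have h4 : |H₁| * (|a - b| * (a ^ 2 + a * b + b ^ 2)) ≤ |H₁| * (‖p - q‖ * (3 * (1 + G) ^ 2)) := by
      gcongr
    linarith
  linarith

lemma c2_bounds (u : EE → ℝ) (S : Set EE) (hS : IsOpen S) (hu : ContDiffOn ℝ 2 u S) (c : EE) (R : ℝ)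
    (hsub : Metric.closedBall c R ⊆ S) :
    ∃ G, ∀ x ∈ Metric.closedBall c R, ‖gradient u x‖ ≤ G ∧ ‖fderiv ℝ (fderiv ℝ u) x‖ ≤ G := by
  have hK := isCompact_closedBall c R
  have h1 : ContDiffOn ℝ 1 (fderiv ℝ u) S := hu.fderiv_of_isOpen hS (by norm_num)
  obtain ⟨A, hA⟩ := hK.exists_bound_of_continuousOn (h1.continuousOn.mono hsub)
  obtain ⟨B, hB⟩ := hK.exists_bound_of_continuousOn
    ((h1.continuousOn_fderiv_of_isOpen hS (by norm_num)).mono hsub)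
  refine ⟨max A B, fun x hx => ⟨?_, (hB x hx).trans (le_max_right _ _)⟩⟩
  rw [gradient, LinearIsometryEquiv.norm_map]
  exact (hA x hx).trans (le_max_left _ _)

lemma hopf (u v : EE → ℝ) (S : Set EE) (hS : IsOpen S) (hu : ContDiffOn ℝ 2 u S)
    (hv : ContDiffOn ℝ 2 v S) (c x₀ : EE) (R : ℝ) (hR : 0 < R)
    (hsub : Metric.closedBall c R ⊆ S)
    (hle : ∀ x ∈ Metric.closedBall c R, v x ≤ u x)
    (hlt : ∀ x ∈ Metric.ball c R, v x < u x)
    (H₁ H₂ : ℝ) (hH : H₁ ≤ H₂)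
    (hpu : ∀ x ∈ Metric.ball c R, cmcOp u x = 2 * H₁)
    (hpv : ∀ x ∈ Metric.ball c R, cmcOp v x = 2 * H₂)
    (hx₀ : dist x₀ c = R) (h0 : u x₀ = v x₀) (hg : gradient u x₀ = gradient v x₀) : False := by
  obtain ⟨G₁, hG₁⟩ := c2_bounds u S hS hu c R hsub
  obtain ⟨G₂, hG₂⟩ := c2_bounds v S hS hv c R hsub
  set G := max G₁ G₂ with hG
  have hG0 : 0 ≤ G := by
    have := (hG₁ c (Metric.mem_closedBall_self hR.le)).1
    exact (norm_nonneg _).trans (this.trans (le_max_left _ _))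
  set C := 6 * |H₁| * (1 + G) ^ 2 + 2 * G * G with hC
  have hC0 : 0 ≤ C := by positivity
  set α := 2 * (3 + G ^ 2 + C * R) / R ^ 2 with hα
  have hαR : α * R ^ 2 = 2 * (3 + G ^ 2 + C * R) := by rw [hα]; field_simp
  have hα0 : 0 < α := by positivity
  clear_value α
  have hcu : ContinuousOn (fun x => u x - v x) (Metric.closedBall c R) :=
    (hu.continuousOn.sub hv.continuousOn).mono hsub
  obtain ⟨m, hm0, hm⟩ : ∃ m > 0, ∀ x ∈ Metric.closedBall c (R / 2), m ≤ u x - v x := by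
    obtain ⟨z, hz, hzm⟩ := (isCompact_closedBall c (R / 2)).exists_isMinOn
      ⟨c, Metric.mem_closedBall_self (by positivity)⟩
      (hcu.mono (Metric.closedBall_subset_closedBall (by linarith)))
    refine ⟨u z - v z, sub_pos.2 (hlt z ?_), fun x hx => hzm hx⟩
    exact Metric.closedBall_subset_ball (by linarith) hz
  set φ : EE → ℝ := fun y => u y - v y - m * (exp (-α * ‖y - c‖ ^ 2) - exp (-α * R ^ 2)) with hφ
  have hφc : ContinuousOn φ (Metric.closedBall c R) := by
    refine hcu.sub (Continuous.continuousOn ?_)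
    fun_prop
  have hpos : ∀ x ∈ Metric.closedBall c R, 0 ≤ φ x := by
    obtain ⟨x, hx, hxm⟩ := (isCompact_closedBall c R).exists_isMinOn
      ⟨c, Metric.mem_closedBall_self hR.le⟩ hφc
    by_contra hcon
    push Not at hcon
    obtain ⟨y, hy, hyn⟩ := hcon
    have hxn : φ x < 0 := (hxm hy).trans_lt hyn
    have hxR : ‖x - c‖ ≤ R := by simpa [dist_eq_norm] using hx
    have hρ1 : R / 2 < ‖x - c‖ := by
      by_contra hlt'
      push Not at hlt'
      have h1 := hm x (by simpa [dist_eq_norm] using hlt')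
      have h2 : exp (-α * ‖x - c‖ ^ 2) ≤ 1 := by
        rw [Real.exp_le_one_iff]; nlinarith [sq_nonneg ‖x - c‖]
      have h3 := exp_pos (-α * R ^ 2)
      have : φ x = u x - v x - m * (exp (-α * ‖x - c‖ ^ 2) - exp (-α * R ^ 2)) := rfl
      nlinarith
    have hρ2 : ‖x - c‖ < R := by
      refine lt_of_le_of_ne hxR fun heq => ?_
      have : φ x = u x - v x := by simp [hφ, heq]
      have := hle x hx
      linarith
    have hxb : x ∈ Metric.ball c R := by simpa [dist_eq_norm] using hρ2
    have hloc : IsLocalMin φ x := hxm.isLocalMin (Metric.closedBall_mem_nhds_of_mem hxb)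
    have hux : ContDiffAt ℝ 2 u x := hu.contDiffAt (hS.mem_nhds (hsub hx))
    have hvx : ContDiffAt ℝ 2 v x := hv.contDiffAt (hS.mem_nhds (hsub hx))
    have key := barrier_min u v c x α m _ hux hvx hloc
    have fu := cmc_formula u x hux
    have fv := cmc_formula v x hvx
    rw [hpu x hxb] at fu
    rw [hpv x hxb] at fv
    obtain ⟨bu, -⟩ := hG₁ x hx
    obtain ⟨bv, bB⟩ := hG₂ x hx
    have bu' : ‖gradient u x‖ ≤ G := bu.trans (le_max_left _ _)
    have bv' : ‖gradient v x‖ ≤ G := bv.trans (le_max_right _ _)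
    have bB' : ‖fderiv ℝ (fderiv ℝ v) x‖ ≤ G := bB.trans (le_max_right _ _)
    have hab := alg_bound (fderiv ℝ (fderiv ℝ v) x) _ _ G G H₁ H₂ hH bu' bv' bB'
    set E := exp (-α * ‖x - c‖ ^ 2) with hE
    have hE0 : 0 < E := exp_pos _
    have hdiff : gradient u x - gradient v x = (-(2 * α * m * E)) • (x - c) := by
      ext i
      have := (key (EuclideanSpace.single i 1)).1
      rw [EuclideanSpace.inner_single_right] at this
      simp only [PiLp.sub_apply, PiLp.smul_apply, grad_apply, smul_eq_mul] at this ⊢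
      rw [this]; simp; ring
    have hnd : ‖gradient u x - gradient v x‖ = 2 * α * m * E * ‖x - c‖ := by
      rw [hdiff, norm_smul, norm_neg, Real.norm_of_nonneg (by positivity)]
    have k0 := (key (EuclideanSpace.single 0 1)).2
    have k1 := (key (EuclideanSpace.single 1 1)).2
    have kq := (key (rotJ (gradient u x))).2
    rw [EuclideanSpace.inner_single_right] at k0 k1
    rw [norm_rotJ] at kq
    have hs : ‖x - c‖ ^ 2 = (x - c) 0 ^ 2 + (x - c) 1 ^ 2 := by
      rw [EuclideanSpace.norm_sq_eq]; simp [Fin.sum_univ_two]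
    simp only [one_mul, conj_trivial, PiLp.norm_single, norm_one] at k0 k1
    rw [hnd, ← hC] at hab
    clear_value C G E
    rw [← fu, ← fv] at hab
    simp only [hessQ] at hab
    generalize fderiv ℝ (fderiv ℝ u) x = Bu at *
    generalize fderiv ℝ (fderiv ℝ v) x = Bv at *
    have hsum : m * E * (4 * α ^ 2 * ‖x - c‖ ^ 2 - 2 * α * (2 + G ^ 2)) ≤
        C * (2 * α * m * E * ‖x - c‖) := by
      have hqq : 0 ≤ m * E * (4 * α ^ 2 * inner ℝ (x - c) (rotJ (gradient u x)) ^ 2) := by positivity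
      have hpp : m * E * (2 * α * ‖gradient u x‖ ^ 2) ≤ m * E * (2 * α * G ^ 2) := by gcongr
      rw [hs]
      linarith
    have hfin : 2 * α * ‖x - c‖ ^ 2 - (2 + G ^ 2) ≤ C * ‖x - c‖ := by
      have hp : 0 < m * E * (2 * α) := by positivity
      refine le_of_mul_le_mul_left ?_ hp
      linarith
    have h5 : C * ‖x - c‖ ≤ C * R := by gcongr
    have h6 : α * (R / 2) ^ 2 ≤ α * ‖x - c‖ ^ 2 := by gcongr
    linarith
  -- derivative along the inward normal
  have hx0m : x₀ ∈ Metric.closedBall c R := by simp [hx₀]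
  have hx0n : ‖x₀ - c‖ = R := by rw [← dist_eq_norm, hx₀]
  have hfd : fderiv ℝ u x₀ = fderiv ℝ v x₀ := by
    simpa [gradient] using hg
  have hux : DifferentiableAt ℝ u x₀ :=
    (hu.contDiffAt (hS.mem_nhds (hsub hx0m))).differentiableAt (by norm_num)
  have hvx : DifferentiableAt ℝ v x₀ :=
    (hv.contDiffAt (hS.mem_nhds (hsub hx0m))).differentiableAt (by norm_num)
  set ℓ : ℝ → EE := fun t => x₀ + t • (c - x₀) with hℓ
  have hℓ0 : ℓ 0 = x₀ := by simp [hℓ]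
  have hℓd : HasDerivAt ℓ (c - x₀) 0 :=
    (((hasDerivAt_id (0:ℝ)).smul_const (c - x₀)).const_add x₀).congr_deriv (by simp)
  have hnorm : ∀ t, ‖ℓ t - c‖ ^ 2 = (1 - t) ^ 2 * R ^ 2 := by
    intro t
    have : ℓ t - c = (1 - t) • (x₀ - c) := by simp only [hℓ]; module
    rw [this, norm_smul, mul_pow, hx0n]; simp
  have hd1 : HasDerivAt (fun t => u (ℓ t)) (fderiv ℝ u x₀ (c - x₀)) 0 := by
    rw [← hℓ0] at hux
    have := hux.hasFDerivAt.comp_hasDerivAt 0 hℓd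
    rwa [hℓ0] at this
  have hd2 : HasDerivAt (fun t => v (ℓ t)) (fderiv ℝ v x₀ (c - x₀)) 0 := by
    rw [← hℓ0] at hvx
    have := hvx.hasFDerivAt.comp_hasDerivAt 0 hℓd
    rwa [hℓ0] at this
  have hq : HasDerivAt (fun t : ℝ => -α * ((1 - t) ^ 2 * R ^ 2)) (2 * α * R ^ 2) 0 := by
    have := ((((hasDerivAt_id (0:ℝ)).const_sub 1).pow 2).mul_const (R ^ 2)).const_mul (-α)
    exact this.congr_deriv (by simp; ring)
  have hd := (hd1.sub hd2).sub ((hq.exp.sub_const (exp (-α * R ^ 2))).const_mul m)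
  have hsl := hd.tendsto_slope_zero_right
  have hge := ge_of_tendsto hsl (b := 0) (by
    have : ∀ᶠ t in 𝓝[>] (0:ℝ), t ∈ Set.Ioo (0:ℝ) 1 := Ioo_mem_nhdsGT one_pos
    filter_upwards [this] with t ht
    have h1 : 0 ≤ φ (ℓ t) := by
      apply hpos
      rw [Metric.mem_closedBall, dist_eq_norm]
      refine le_of_sq_le_sq ?_ hR.le
      rw [hnorm]
      have : (1 - t) ^ 2 ≤ 1 := by nlinarith [ht.1, ht.2]
      nlinarith [sq_nonneg R]
    simp only [hφ, hnorm] at h1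
    simp only [Pi.sub_apply, zero_add, hℓ0, h0, smul_eq_mul]
    have := ht.1
    apply mul_nonneg (by positivity)
    simpa using h1)
  rw [hfd] at hge
  simp only [sub_self, zero_sub] at hge
  have : 0 < m * (exp (-α * ((1 - 0) ^ 2 * R ^ 2)) * (2 * α * R ^ 2)) := by positivity
  linarith

/-- Boundary tangency principle for constant-mean-curvature graphs on the
closed upper half-disk `D⁺ = {x : |x| < r, x₂ ≥ 0}`. -/
theorem boundary_tangency_principle
    (r : ℝ) (hr : 0 < r)
    (u v : EuclideanSpace ℝ (Fin 2) → ℝ)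
    -- `u` and `v` are C² on `D⁺`, i.e. they extend C² to a neighborhood of `D⁺`
    (hu : ∃ U : Set (EuclideanSpace ℝ (Fin 2)), IsOpen U ∧
      {x : EuclideanSpace ℝ (Fin 2) | ‖x‖ < r ∧ 0 ≤ x 1} ⊆ U ∧ ContDiffOn ℝ 2 u U)
    (hv : ∃ U : Set (EuclideanSpace ℝ (Fin 2)), IsOpen U ∧
      {x : EuclideanSpace ℝ (Fin 2) | ‖x‖ < r ∧ 0 ≤ x 1} ⊆ U ∧ ContDiffOn ℝ 2 v U)
    (huv : ∀ x : EuclideanSpace ℝ (Fin 2), ‖x‖ < r → 0 ≤ x 1 → v x ≤ u x)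
    (htouch : u 0 = v 0)
    (hgrad : gradient u 0 = gradient v 0)
    (H₁ H₂ : ℝ) (hH : H₁ ≤ H₂)
    (hpdeu : ∀ x : EuclideanSpace ℝ (Fin 2), ‖x‖ < r → 0 < x 1 → cmcOp u x = 2 * H₁)
    (hpdev : ∀ x : EuclideanSpace ℝ (Fin 2), ‖x‖ < r → 0 < x 1 → cmcOp v x = 2 * H₂) :
    ∃ ε > 0, Set.EqOn u v
      ({x : EuclideanSpace ℝ (Fin 2) | ‖x‖ < r ∧ 0 ≤ x 1} ∩ Metric.ball 0 ε) := by
  obtain ⟨U, hUo, hUs, hU⟩ := hu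
  obtain ⟨V, hVo, hVs, hV⟩ := hv
  set S := U ∩ V with hSdef
  have hS : IsOpen S := hUo.inter hVo
  have hDS : ∀ x : EE, ‖x‖ < r → 0 ≤ x 1 → x ∈ S := fun x h1 h2 => ⟨hUs ⟨h1, h2⟩, hVs ⟨h1, h2⟩⟩
  have huS : ContDiffOn ℝ 2 u S := hU.mono Set.inter_subset_left
  have hvS : ContDiffOn ℝ 2 v S := hV.mono Set.inter_subset_right
  set Ω : Set EE := {x | ‖x‖ < r ∧ 0 < x 1} with hΩ
  have hΩo : IsOpen Ω := by
    apply IsOpen.inter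
    · exact isOpen_lt continuous_norm continuous_const
    · have : Continuous (fun x : EE => x 1) := by fun_prop
      exact isOpen_lt continuous_const this
  have hΩc : Convex ℝ Ω := by
    have h1 : Convex ℝ {x : EE | ‖x‖ < r} := by
      have := convex_ball (0 : EE) r
      simpa [Metric.ball, dist_eq_norm] using this
    have h2 : Convex ℝ {x : EE | 0 < x 1} :=
      convex_halfSpace_gt (f := fun x : EE => x 1) ⟨fun _ _ => rfl, fun _ _ => rfl⟩ 0
    exact h1.inter h2
  have hΩS : Ω ⊆ S := fun x hx => hDS x hx.1 hx.2.le
  have hcont : ContinuousOn (fun x => u x - v x) S := huS.continuousOn.sub hvS.continuousOn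
  -- ball at the origin
  have horigin : ∃ p ∈ Ω, u p = v p := by
    by_contra hcon
    push Not at hcon
    set c : EE := EuclideanSpace.single 1 (r / 3) with hc
    have hcn : ‖c‖ = r / 3 := by
      rw [hc, PiLp.norm_single, Real.norm_of_nonneg (by positivity)]
    have hcomp : ∀ x : EE, r / 3 - x 1 ≤ ‖x - c‖ := by
      intro x
      have := (neg_abs_le _).trans' (neg_le_neg (PiLp.norm_apply_le (x - c) 1))
      simp [hc] at this
      linarith
    have hn : ∀ x : EE, ‖x‖ ≤ ‖x - c‖ + r / 3 := by
      intro x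
      have := norm_add_le (x - c) c
      rw [hcn] at this; simpa using this
    have hclosed : ∀ x ∈ Metric.closedBall c (r / 3), ‖x‖ < r ∧ 0 ≤ x 1 := by
      intro x hx
      rw [Metric.mem_closedBall, dist_eq_norm] at hx
      exact ⟨by linarith [hn x], by linarith [hcomp x]⟩
    have hopen : ∀ x ∈ Metric.ball c (r / 3), ‖x‖ < r ∧ 0 < x 1 := by
      intro x hx
      rw [Metric.mem_ball, dist_eq_norm] at hx
      exact ⟨by linarith [hn x], by linarith [hcomp x]⟩
    refine hopf u v S hS huS hvS c 0 (r / 3) (by positivity)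
      (fun x hx => hDS x (hclosed x hx).1 (hclosed x hx).2)
      (fun x hx => huv x (hclosed x hx).1 (hclosed x hx).2)
      (fun x hx => lt_of_le_of_ne (huv x (hopen x hx).1 (hopen x hx).2.le)
        (fun h => hcon x (hopen x hx) h.symm)) H₁ H₂ hH
      (fun x hx => hpdeu x (hopen x hx).1 (hopen x hx).2)
      (fun x hx => hpdev x (hopen x hx).1 (hopen x hx).2) ?_ htouch hgrad
    rw [dist_eq_norm, zero_sub, norm_neg, hcn]
  obtain ⟨p, hpΩ, hp⟩ := horigin
  -- the zero set is open
  have hZo : ∀ z ∈ Ω, u z = v z → ∀ᶠ y in 𝓝 z, u y = v y := by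
    intro z hz hzz
    obtain ⟨δ, hδ, hδΩ⟩ := Metric.isOpen_iff.1 hΩo z hz
    by_contra hcon
    have hfr : ∃ᶠ y in 𝓝 z, u y ≠ v y := Filter.not_eventually.1 hcon
    obtain ⟨c, hc, hcz⟩ := (hfr.and_eventually (Metric.ball_mem_nhds z (half_pos hδ))).exists
    have hcz' : dist c z < δ / 2 := hcz
    have hsub : Metric.closedBall c (dist c z) ⊆ Ω := by
      intro y hy
      apply hδΩ
      rw [Metric.mem_closedBall] at hy
      rw [Metric.mem_ball]
      linarith [dist_triangle y c z]
    set K := Metric.closedBall c (dist c z) ∩ {x | u x - v x = 0} with hK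
    have hKc : IsCompact K := by
      have h1 : IsClosed K :=
        ((hcont.mono (hsub.trans hΩS)).preimage_isClosed_of_isClosed Metric.isClosed_closedBall
          (isClosed_singleton (x := (0:ℝ))))
      exact (isCompact_closedBall c (dist c z)).of_isClosed_subset h1 Set.inter_subset_left
    have hKn : K.Nonempty := ⟨z, by simp [dist_comm], by simp [hzz]⟩
    obtain ⟨x₀, hx₀, hmin⟩ := hKc.exists_isMinOn hKn
      (f := fun x => dist x c) (by fun_prop)
    have hx₀e : u x₀ = v x₀ := sub_eq_zero.1 hx₀.2
    have hx₀Ω : x₀ ∈ Ω := hsub hx₀.1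
    have hRle : dist x₀ c ≤ dist c z := hx₀.1
    have hRpos : 0 < dist x₀ c := dist_pos.2 (fun h => hc (h ▸ hx₀e))
    have hsub' : Metric.closedBall c (dist x₀ c) ⊆ Ω :=
      (Metric.closedBall_subset_closedBall hRle).trans hsub
    have hsubb : Metric.ball c (dist x₀ c) ⊆ Ω := Metric.ball_subset_closedBall.trans hsub'
    have hg : gradient u x₀ = gradient v x₀ := by
      have hlm : IsLocalMin (fun x => u x - v x) x₀ := by
        filter_upwards [hΩo.mem_nhds hx₀Ω] with y hy
        have := huv y hy.1 hy.2.le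
        simp only [hx₀e, sub_self]
        linarith
      have h1 := hlm.fderiv_eq_zero
      have d1 : DifferentiableAt ℝ u x₀ :=
        (huS.contDiffAt (hS.mem_nhds (hΩS hx₀Ω))).differentiableAt (by norm_num)
      have d2 : DifferentiableAt ℝ v x₀ :=
        (hvS.contDiffAt (hS.mem_nhds (hΩS hx₀Ω))).differentiableAt (by norm_num)
      rw [fderiv_fun_sub d1 d2, sub_eq_zero] at h1
      rw [gradient, gradient, h1]
    refine hopf u v S hS huS hvS c x₀ (dist x₀ c) hRpos (hsub'.trans hΩS)
      (fun x hx => huv x (hsub' hx).1 (hsub' hx).2.le)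
      (fun x hx => lt_of_le_of_ne (huv x (hsubb hx).1 (hsubb hx).2.le) (fun h => ?_)) H₁ H₂ hH
      (fun x hx => hpdeu x (hsubb hx).1 (hsubb hx).2)
      (fun x hx => hpdev x (hsubb hx).1 (hsubb hx).2) rfl hx₀e hg
    have hxK : x ∈ K := ⟨(Metric.mem_ball.1 hx).le.trans hRle, by simp [h]⟩
    exact absurd (hmin hxK) (not_le.2 (Metric.mem_ball.1 hx))
  have hall : ∀ x ∈ Ω, u x = v x := by
    by_contra hcon
    push Not at hcon
    obtain ⟨y, hyΩ, hy⟩ := hcon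
    have ho1 : IsOpen (Ω ∩ {x | u x = v x}) := by
      rw [isOpen_iff_mem_nhds]
      rintro z ⟨hz, hzz⟩
      exact inter_mem (hΩo.mem_nhds hz) (hZo z hz hzz)
    have ho2 : IsOpen (Ω ∩ {x | u x ≠ v x}) := by
      rw [isOpen_iff_mem_nhds]
      rintro z ⟨hz, hzz⟩
      refine inter_mem (hΩo.mem_nhds hz) ?_
      have hca := hcont.continuousAt (hS.mem_nhds (hΩS hz))
      filter_upwards [hca.eventually_ne (sub_ne_zero.2 hzz)] with t ht
      exact sub_ne_zero.1 ht
    obtain ⟨w, -, hw1, hw2⟩ := hΩc.isPreconnected _ _ ho1 ho2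
      (fun x hx => (em (u x = v x)).imp (fun h => ⟨hx, h⟩) (fun h => ⟨hx, h⟩))
      ⟨p, hpΩ, hpΩ, hp⟩ ⟨y, hyΩ, hyΩ, hy⟩
    exact hw2.2 hw1.2
  refine ⟨r, hr, ?_⟩
  rintro x ⟨⟨hx1, hx2⟩, -⟩
  have hxS := hDS x hx1 hx2
  have hℓ : Tendsto (fun t : ℝ => x + t • (EuclideanSpace.single 1 1 : EE)) (𝓝[>] 0) (𝓝 x) := by
    have : Continuous (fun t : ℝ => x + t • (EuclideanSpace.single 1 1 : EE)) := by fun_prop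
    have h := this.tendsto 0
    simp only [zero_smul, add_zero] at h
    exact h.mono_left nhdsWithin_le_nhds
  have h1 := (hcont.continuousAt (hS.mem_nhds hxS)).tendsto.comp hℓ
  have h2 : ∀ᶠ t in 𝓝[>] (0:ℝ),
      (0:ℝ) = ((fun x => u x - v x) ∘ fun t : ℝ => x + t • (EuclideanSpace.single 1 1 : EE)) t := by
    have hb : ∀ᶠ y : EE in 𝓝 x, ‖y‖ < r := (continuous_norm.tendsto x).eventually_lt_const hx1
    filter_upwards [hℓ.eventually hb, self_mem_nhdsWithin] with t ht ht0
    have : x + t • (EuclideanSpace.single 1 1 : EE) ∈ Ω := by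
      refine ⟨ht, ?_⟩
      have : (0:ℝ) < t := ht0
      simp
      linarith
    simp only [Function.comp, hall _ this, sub_self]
  have h3 := tendsto_nhds_unique h1 (tendsto_const_nhds.congr' h2)
  exact sub_eq_zero.1 h3
end
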